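/- For every integer k ≥ 2 there exists a deterministic online algorithm A for bin packing with cardinality constraint k (namely the algorithm Thin-and-Fat) such that for every input list L, A(L) ≤ 2·OPT(L). That is, there is an online algorithm whose absolute competitive ratio is at most 2 for every k ≥ 2. -/

import Mathlib

/-!
The algorithm retires bins in pairs. Call an open bin *short* if it holds at most `k - 2` items and
*long* if it holds exactly `k - 1`. An item of size `x` is treated as follows.

* If it fits into a short bin, it goes there.
* Otherwise every short bin has load more than `1 - x`. If there are a short bin `H` and a long bin
  `T`, then either `x` fits into `T`, and `H` and `T` are retired after `x` is put into `T`; or `T`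
  has load more than `1 - x`, and `x` is put into a new bin, which is retired together with `T`.
  Either way the retired pair has total load more than `1` and at least `k` items.
* Otherwise `x` opens a new bin, which stays open.

At every time, either the open bins have pairwise load sums above `1`, or at most one of them is
short: a short bin is added to another one only when there are no long bins and `x` fits into no
short bin. So all but one of the open bins have load above `1 / 2`, or all but one of them
hold at least `k - 1 ≥ k / 2` items, and the retired bins reach both values on average. Hence the
number of bins is less than `2 * (total size) + 1` or less than `2 * (number of items) / k + 1`,
while `OPT` is at least the total size and at least the number of items divided by `k`.
-/

open scoped Classical
noncomputable section

/-- An input is a list of item sizes, each in (0,1]. -/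
def ValidInput (L : List ℝ) : Prop := ∀ x ∈ L, 0 < x ∧ x ≤ 1

/-- A packing assigns a bin index to each item; it is feasible for cardinality
constraint `k` if every bin receives at most `k` items of total size at most 1. -/
def IsFeasible (k : ℕ) (L : List ℝ) (f : Fin L.length → ℕ) : Prop :=
  ∀ b : ℕ,
    (Finset.univ.filter (fun i => f i = b)).card ≤ k ∧
    ∑ i ∈ Finset.univ.filter (fun i => f i = b), L.get i ≤ 1

/-- The number of bins used by a packing. -/
def binsUsed (L : List ℝ) (f : Fin L.length → ℕ) : ℕ :=
  (Finset.univ.image f).card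

/-- The optimal (minimum) number of bins in a feasible packing of `L`. -/
def OPT (k : ℕ) (L : List ℝ) : ℕ :=
  sInf {n | ∃ f : Fin L.length → ℕ, IsFeasible k L f ∧ binsUsed L f = n}

/-- A deterministic online algorithm is a strategy: given the items seen so far
(ending with the item to be packed), it returns the bin index for that item. -/
def onlinePacking (A : List ℝ → ℕ) (L : List ℝ) : Fin L.length → ℕ :=
  fun i => A (L.take (i.1 + 1))

/-- The strategy `A` is a valid online algorithm for cardinality constraint `k`
if on every valid input the induced packing is feasible. -/
def OnlineValid (k : ℕ) (A : List ℝ → ℕ) : Prop :=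
  ∀ L : List ℝ, ValidInput L → IsFeasible k L (onlinePacking A L)

/-- The number of bins used by online algorithm `A` on input `L`. -/
def onlineBins (A : List ℝ → ℕ) (L : List ℝ) : ℕ :=
  binsUsed L (onlinePacking A L)

/-- The state of First Fit: a list of open bins (in order of opening),
each recorded as (number of items, total size). `ffFind` returns the index of
the first bin that can receive an item of size `x` (it has at most `k-1` items
and the item fits); if none, the index of a new bin. -/
def ffFind (k : ℕ) (x : ℝ) : List (ℕ × ℝ) → ℕ
  | [] => 0
  | b :: bs => if b.1 < k ∧ b.2 + x ≤ 1 then 0 else ffFind k x bs + 1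

/-- Update the First Fit state after packing an item of size `x`. -/
def ffUpdate (k : ℕ) (x : ℝ) : List (ℕ × ℝ) → List (ℕ × ℝ)
  | [] => [(1, x)]
  | b :: bs =>
      if b.1 < k ∧ b.2 + x ≤ 1 then (b.1 + 1, b.2 + x) :: bs
      else b :: ffUpdate k x bs

/-- The final state of First Fit with cardinality constraint `k` on input `L`. -/
def ffState (k : ℕ) (L : List ℝ) : List (ℕ × ℝ) :=
  L.foldl (fun bs x => ffUpdate k x bs) []

/-- The number of bins used by First Fit with cardinality constraint `k` on `L`. -/
def FF (k : ℕ) (L : List ℝ) : ℕ := (ffState k L).length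

/-- The bin index into which First Fit packs the `i`-th item of `L`. -/
def ffAssign (k : ℕ) (L : List ℝ) (i : Fin L.length) : ℕ :=
  ffFind k (L.get i) (ffState k (L.take i.1))

section HalfFull

variable {ι R : Type*} [CommRing R] [LinearOrder R] {w : ι → R} {c : R} {S T : Finset ι}

/-- The bins in `S`, with weights `w`, have average weight at least half the capacity `c`. It is
used with the load of a bin and capacity `1`, and with its number of items and capacity `k`. -/
def HalfFull (w : ι → R) (c : R) (S : Finset ι) : Prop :=
  S.card * c ≤ 2 * ∑ b ∈ S, w b

lemma HalfFull.congr {w' : ι → R} (h : HalfFull w c S) (hw : ∀ b ∈ S, w' b = w b) :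
    HalfFull w' c S := by
  rwa [HalfFull, Finset.sum_congr rfl hw]

variable [IsStrictOrderedRing R]

lemma HalfFull.union [DecidableEq ι] (hS : HalfFull w c S) (hT : HalfFull w c T)
    (hST : Disjoint S T) : HalfFull w c (S ∪ T) := by
  unfold HalfFull at *
  rw [Finset.card_union_of_disjoint hST, Finset.sum_union hST]
  push_cast
  linarith

lemma halfFull_pair [DecidableEq ι] {a b : ι} (hab : a ≠ b) (h : c ≤ w a + w b) :
    HalfFull w c {a, b} := by
  rw [HalfFull, Finset.card_pair hab, Finset.sum_pair hab]
  push_cast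
  linarith

lemma card_mul_lt_two_mul_sum_add (hc : 0 < c) (hpos : ∀ b ∈ S, 0 < w b)
    (hlight : {b | b ∈ S ∧ 2 * w b < c}.Subsingleton) :
    S.card * c < 2 * ∑ b ∈ S, w b + c := by
  classical
  have heavy_sum : ∀ U : Finset ι, (∀ b ∈ U, c ≤ 2 * w b) → U.card * c ≤ 2 * ∑ b ∈ U, w b := by
    intro U hU
    rw [← nsmul_eq_mul, Finset.mul_sum]
    exact Finset.card_nsmul_le_sum U _ c hU
  by_cases hex : ∃ a ∈ S, 2 * w a < c
  · obtain ⟨a, haS, ha⟩ := hex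
    have hrest := heavy_sum (S.erase a) fun b hb => by
      obtain ⟨hba, hbS⟩ := Finset.mem_erase.1 hb
      exact not_lt.1 fun hb' => hba (hlight ⟨hbS, hb'⟩ ⟨haS, ha⟩)
    rw [← Finset.card_erase_add_one haS, ← Finset.add_sum_erase S w haS]
    push_cast
    linarith [hpos a haS]
  · push Not at hex
    linarith [heavy_sum S hex]

lemma HalfFull.card_union_le [DecidableEq ι] (hT : HalfFull w c T) (hST : Disjoint S T)
    (hc : 0 < c) (hpos : ∀ b ∈ S, 0 < w b) (hlight : {b | b ∈ S ∧ 2 * w b < c}.Subsingleton)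
    {m : ℕ} (hm : ∑ b ∈ S ∪ T, w b ≤ m * c) : (S ∪ T).card ≤ 2 * m := by
  have hS := card_mul_lt_two_mul_sum_add hc hpos hlight
  rw [HalfFull] at hT
  rw [Finset.sum_union hST] at hm
  have hlt : ((S.card + T.card : ℕ) : R) * c < ((2 * m + 1 : ℕ) : R) * c := by
    push_cast
    linarith
  have := Nat.cast_lt.1 (lt_of_mul_lt_mul_right hlt hc.le)
  rw [Finset.card_union_of_disjoint hST]
  omega

end HalfFull

section Packing

variable {k : ℕ} {L : List ℝ}

/-- The multiset of sizes of the items that the packing `f` of `L` puts into bin `b`. -/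
def binItems (L : List ℝ) (f : Fin L.length → ℕ) (b : ℕ) : Multiset ℝ :=
  ∑ i with f i = b, {L.get i}

/-- A bin with contents `B` respects the cardinality constraint `k` and the capacity `1`. -/
def FitsBin (k : ℕ) (B : Multiset ℝ) : Prop := B.card ≤ k ∧ B.sum ≤ 1

lemma isFeasible_iff {f : Fin L.length → ℕ} :
    IsFeasible k L f ↔ ∀ b, FitsBin k (binItems L f b) := by
  simp [IsFeasible, FitsBin, binItems, Multiset.sum_sum]

lemma sum_binItems {f : Fin L.length → ℕ} {S : Finset ℕ} (hf : ∀ i, f i ∈ S) :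
    ∑ b ∈ S, binItems L f b = L := by
  unfold binItems
  rw [Finset.sum_fiberwise_of_maps_to fun i _ => hf i, ← Fin.sum_ofFn,
    ← Function.comp_def singleton, ← List.map_ofFn, List.ofFn_get, ← Multiset.sum_coe,
    ← Multiset.map_coe, Multiset.sum_map_singleton]

lemma mem_binItems (f : Fin L.length → ℕ) (i : Fin L.length) :
    L.get i ∈ binItems L f (f i) :=
  Multiset.mem_sum.2 ⟨i, by simp, Multiset.mem_singleton_self _⟩

lemma sum_binItems_sum {f : Fin L.length → ℕ} {S : Finset ℕ} (hf : ∀ i, f i ∈ S) :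
    ∑ b ∈ S, (binItems L f b).sum = L.sum := by
  rw [← Multiset.sum_sum, sum_binItems hf, Multiset.sum_coe]

lemma sum_card_binItems {f : Fin L.length → ℕ} {S : Finset ℕ} (hf : ∀ i, f i ∈ S) :
    ∑ b ∈ S, (binItems L f b).card = L.length := by
  rw [← Multiset.card_sum, sum_binItems hf, Multiset.coe_card]

lemma binsUsed_le_card {f : Fin L.length → ℕ} {S : Finset ℕ} (hf : ∀ i, f i ∈ S) :
    binsUsed L f ≤ S.card := by
  unfold binsUsed
  exact Finset.card_le_card (Finset.image_subset_iff.2 fun i _ => hf i)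

lemma IsFeasible.sum_le_binsUsed {f : Fin L.length → ℕ} (hf : IsFeasible k L f) :
    L.sum ≤ binsUsed L f := by
  rw [← sum_binItems_sum fun i => Finset.mem_image_of_mem f (Finset.mem_univ i), binsUsed,
    ← nsmul_one]
  exact Finset.sum_le_card_nsmul _ _ _ fun b _ => (isFeasible_iff.1 hf b).2

lemma IsFeasible.length_le_mul_binsUsed {f : Fin L.length → ℕ} (hf : IsFeasible k L f) :
    L.length ≤ k * binsUsed L f := by
  rw [← sum_card_binItems fun i => Finset.mem_image_of_mem f (Finset.mem_univ i), binsUsed,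
    mul_comm, ← smul_eq_mul]
  exact Finset.sum_le_card_nsmul _ _ _ fun b _ => (isFeasible_iff.1 hf b).1

lemma isFeasible_of_injective (hk : 0 < k) (hL : ∀ x ∈ L, x ≤ 1) {f : Fin L.length → ℕ}
    (hf : f.Injective) : IsFeasible k L f := by
  intro b
  by_cases hb : ∃ i, f i = b
  · obtain ⟨i, rfl⟩ := hb
    simp [hf.eq_iff, Finset.filter_eq', Nat.one_le_iff_ne_zero, hk.ne', hL]
  · simp [not_exists.1 hb]

lemma exists_isFeasible_binsUsed_eq_OPT (hk : 0 < k) (hL : ∀ x ∈ L, x ≤ 1) :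
    ∃ f, IsFeasible k L f ∧ binsUsed L f = OPT k L :=
  Nat.sInf_mem (s := {n | ∃ f, IsFeasible k L f ∧ binsUsed L f = n})
    ⟨_, Fin.val, isFeasible_of_injective hk hL Fin.val_injective, rfl⟩

lemma binItems_onlinePacking_append (A : List ℝ → ℕ) (L : List ℝ) (x : ℝ) :
    binItems (L ++ [x]) (onlinePacking A (L ++ [x])) =
      Function.update (binItems L (onlinePacking A L)) (A (L ++ [x]))
        (x ::ₘ binItems L (onlinePacking A L) (A (L ++ [x]))) := by
  have hlen : L.length + 1 = (L ++ [x]).length := by simp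
  have htake : (L ++ [x]).take (L.length + 1) = L ++ [x] := List.take_of_length_le hlen.ge
  ext1 b
  have hsum : binItems (L ++ [x]) (onlinePacking A (L ++ [x])) b =
      binItems L (onlinePacking A L) b + if A (L ++ [x]) = b then {x} else 0 := by
    unfold binItems
    simp only [Finset.sum_filter]
    rw [← (finCongr hlen).sum_comp, Fin.sum_univ_castSucc]
    simp only [onlinePacking, finCongr_apply, Fin.val_cast, Fin.val_castSucc, Fin.val_last, htake,
      Order.add_one_le_iff, Fin.is_lt, List.take_append_of_le_length, List.get_eq_getElem,
      List.getElem_append_left, Std.le_refl, List.getElem_append_right, tsub_self,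
      List.getElem_cons_zero]
    rfl
  rw [hsum]
  obtain rfl | hb := eq_or_ne b (A (L ++ [x]))
  · simp [add_comm _ {x}, Multiset.singleton_add]
  · simp [hb, hb.symm]

end Packing

/-- A state of the online algorithm: the contents of every bin, the bins in use, split into those
that are still open and those that are retired, and the bin of the latest item. Bins that are
neither open nor retired are unused. -/
structure PackState where
  content : ℕ → Multiset ℝ
  opened : Finset ℕ
  retired : Finset ℕ
  last : ℕ

namespace PackState

variable {k a b : ℕ} {x : ℝ} {s s' : PackState}

/-- The total size of the items in bin `b`. -/
def load (s : PackState) (b : ℕ) : ℝ := (s.content b).sum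

/-- The number of items in bin `b`. -/
def count (s : PackState) (b : ℕ) : ℕ := (s.content b).card

/-- The set of bins in use. -/
def used (s : PackState) : Finset ℕ := s.opened ∪ s.retired

/-- The unused bin that is opened next. -/
def fresh (s : PackState) : ℕ := Nat.find (Infinite.exists_notMem_finset s.used)

/-- The open bins that remain below the cardinality constraint `k` after receiving an item. -/
def short (k : ℕ) (s : PackState) : Finset ℕ := {b ∈ s.opened | s.count b + 1 < k}

/-- The open bins that reach the cardinality constraint `k` after receiving an item. -/
def long (k : ℕ) (s : PackState) : Finset ℕ := {b ∈ s.opened | s.count b + 1 = k}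

/-- The state before the first item. -/
def init : PackState := ⟨fun _ => 0, ∅, ∅, 0⟩

/-- Put an item of size `x` into bin `b`, opening `b` if it is unused. -/
def put (s : PackState) (x : ℝ) (b : ℕ) : PackState where
  content := Function.update s.content b (x ::ₘ s.content b)
  opened := insert b s.opened
  retired := s.retired
  last := b

/-- Retire the bins `a` and `b`. -/
def retire (s : PackState) (a b : ℕ) : PackState :=
  { s with opened := s.opened \ {a, b}, retired := s.retired ∪ {a, b} }

/-- Pack an item of size `x` by the rules of the pairing algorithm. -/
def step (k : ℕ) (s : PackState) (x : ℝ) : PackState :=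
  if hfit : ∃ b ∈ s.short k, s.load b + x ≤ 1 then s.put x hfit.choose
  else if hpair : (s.short k).Nonempty ∧ (s.long k).Nonempty then
    if s.load hpair.2.choose + x ≤ 1 then
      (s.put x hpair.2.choose).retire hpair.1.choose hpair.2.choose
    else (s.put x s.fresh).retire s.fresh hpair.2.choose
  else s.put x s.fresh

/-- The state after packing the items of `L`. -/
def run (k : ℕ) (L : List ℝ) : PackState := L.foldl (step k) init

/-- The part of the invariant that does not restrict the open bins: the packing is feasible, and
the retired bins are on average half full, both by size and by cardinality. -/
structure Sound (k : ℕ) (s : PackState) : Prop where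
  fitsBin : ∀ b, FitsBin k (s.content b)
  content_eq_zero : ∀ b ∉ s.used, s.content b = 0
  disjoint : Disjoint s.opened s.retired
  halfFull_load : HalfFull s.load 1 s.retired
  halfFull_count : HalfFull (fun b => (s.count b : ℝ)) k s.retired

/-- The invariant of the pairing algorithm. By `crowded_or_subsingleton`, all open bins but at most
one are half full by size, or all but at most one are half full by cardinality. -/
structure Invariant (k : ℕ) (s : PackState) : Prop extends s.Sound k where
  load_pos : ∀ b ∈ s.opened, 0 < s.load b
  count_lt : ∀ b ∈ s.opened, s.count b < k
  crowded_or_subsingleton : (s.opened : Set ℕ).Pairwise (fun a b => 1 < s.load a + s.load b) ∨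
    (s.short k : Set ℕ).Subsingleton

lemma mem_short : b ∈ s.short k ↔ b ∈ s.opened ∧ s.count b + 1 < k := Finset.mem_filter

lemma mem_long : b ∈ s.long k ↔ b ∈ s.opened ∧ s.count b + 1 = k := Finset.mem_filter

lemma fresh_notMem_used (s : PackState) : s.fresh ∉ s.used :=
  Nat.find_spec (Infinite.exists_notMem_finset s.used)

lemma fresh_notMem_opened (s : PackState) : s.fresh ∉ s.opened :=
  fun h => s.fresh_notMem_used (Finset.mem_union_left _ h)

lemma fresh_notMem_retired (s : PackState) : s.fresh ∉ s.retired :=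
  fun h => s.fresh_notMem_used (Finset.mem_union_right _ h)

lemma load_put_self (s : PackState) (x : ℝ) (b : ℕ) : (s.put x b).load b = s.load b + x := by
  simp [load, put, add_comm]

lemma load_put_of_ne (s : PackState) (x : ℝ) (h : a ≠ b) : (s.put x b).load a = s.load a := by
  simp [load, put, h]

lemma count_put_self (s : PackState) (x : ℝ) (b : ℕ) : (s.put x b).count b = s.count b + 1 := by
  simp [count, put]

lemma count_put_of_ne (s : PackState) (x : ℝ) (h : a ≠ b) :
    (s.put x b).count a = s.count a := by
  simp [count, put, h]

lemma load_le_load_put (hx : 0 ≤ x) (a b : ℕ) : s.load a ≤ (s.put x b).load a := by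
  obtain rfl | hab := eq_or_ne a b
  · simpa [load_put_self] using hx
  · rw [load_put_of_ne s x hab]

lemma count_le_count_put (s : PackState) (x : ℝ) (a b : ℕ) :
    s.count a ≤ (s.put x b).count a := by
  obtain rfl | hab := eq_or_ne a b
  · simp [count_put_self]
  · rw [count_put_of_ne s x hab]

lemma used_retire (ha : a ∈ s.opened) (hb : b ∈ s.opened) : (s.retire a b).used = s.used := by
  have hab : {a, b} ⊆ s.opened := by simp [Finset.insert_subset_iff, ha, hb]
  rw [used, retire, used, Finset.union_comm s.retired, ← Finset.union_assoc,
    Finset.sdiff_union_of_subset hab]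

lemma short_put_fresh_subset (hshort : s.short k = ∅) :
    (s.put x s.fresh).short k ⊆ {s.fresh} := by
  intro b hb
  obtain ⟨hbo, hbk⟩ := mem_short.1 hb
  by_contra hne
  rw [Finset.mem_singleton] at hne
  rw [count_put_of_ne s x hne] at hbk
  have : b ∈ s.short k := mem_short.2 ⟨Finset.mem_of_mem_insert_of_ne hbo hne, hbk⟩
  simp [hshort] at this

namespace Sound

lemma notMem_retired (h : s.Sound k) (hb : b ∈ s.opened) : b ∉ s.retired :=
  Finset.disjoint_left.1 h.disjoint hb

lemma load_fresh (h : s.Sound k) : s.load s.fresh = 0 := by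
  simp [load, h.content_eq_zero _ s.fresh_notMem_used]

lemma count_fresh (h : s.Sound k) : s.count s.fresh = 0 := by
  simp [count, h.content_eq_zero _ s.fresh_notMem_used]

lemma put (h : s.Sound k) (hb : b ∉ s.retired) (hcount : s.count b < k)
    (hload : s.load b + x ≤ 1) : (s.put x b).Sound k where
  fitsBin a := by
    change (s.put x b).count a ≤ k ∧ (s.put x b).load a ≤ 1
    obtain rfl | hab := eq_or_ne a b
    · rw [count_put_self, load_put_self]
      exact ⟨hcount, hload⟩
    · rw [count_put_of_ne s x hab, load_put_of_ne s x hab]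
      exact h.fitsBin a
  content_eq_zero a ha := by
    simp only [used, PackState.put, Finset.insert_union, Finset.mem_insert, not_or] at ha
    exact (Function.update_of_ne ha.1 _ _).trans (h.content_eq_zero a ha.2)
  disjoint := Finset.disjoint_insert_left.2 ⟨hb, h.disjoint⟩
  halfFull_load := h.halfFull_load.congr fun _ ha => load_put_of_ne s x (ne_of_mem_of_not_mem ha hb)
  halfFull_count := h.halfFull_count.congr fun _ ha => by
    rw [count_put_of_ne s x (ne_of_mem_of_not_mem ha hb)]

lemma put_fresh (h : s.Sound k) (hk : 0 < k) (hx : x ≤ 1) : (s.put x s.fresh).Sound k :=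
  h.put s.fresh_notMem_retired (h.count_fresh ▸ hk) (by rwa [h.load_fresh, zero_add])

lemma retire (h : s.Sound k) (ha : a ∈ s.opened) (hb : b ∈ s.opened) (hab : a ≠ b)
    (hload : 1 ≤ s.load a + s.load b) (hcount : k ≤ s.count a + s.count b) :
    (s.retire a b).Sound k where
  fitsBin := h.fitsBin
  content_eq_zero c hc := h.content_eq_zero c (used_retire ha hb ▸ hc)
  disjoint := Finset.disjoint_union_right.2
    ⟨h.disjoint.mono_left Finset.sdiff_subset, Finset.sdiff_disjoint⟩
  halfFull_load := h.halfFull_load.union (halfFull_pair hab hload)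
    (by simp [h.notMem_retired ha, h.notMem_retired hb])
  halfFull_count := h.halfFull_count.union (halfFull_pair hab (mod_cast hcount))
    (by simp [h.notMem_retired ha, h.notMem_retired hb])

end Sound

lemma sound_init (k : ℕ) : init.Sound k := by
  constructor <;> simp [init, FitsBin, HalfFull]

lemma invariant_init (k : ℕ) : init.Invariant k where
  toSound := sound_init k
  load_pos := by simp [init]
  count_lt := by simp [init]
  crowded_or_subsingleton := by simp [init]

namespace Invariant

lemma count_pos (h : s.Invariant k) (hb : b ∈ s.opened) : 0 < s.count b := by
  refine Multiset.card_pos.2 fun h0 => (h.load_pos b hb).ne' ?_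
  rw [load, h0, Multiset.sum_zero]

lemma of_opened_subset (h : s.Invariant k) (hs' : s'.Sound k) (hsub : s'.opened ⊆ s.opened)
    (hcontent : ∀ b ∈ s'.opened, s'.content b = s.content b) : s'.Invariant k := by
  have hload : ∀ b ∈ s'.opened, s'.load b = s.load b := fun b hb => by
    rw [load, hcontent b hb, load]
  have hcount : ∀ b ∈ s'.opened, s'.count b = s.count b := fun b hb => by
    rw [count, hcontent b hb, count]
  refine ⟨hs', fun b hb => ?_, fun b hb => ?_, h.crowded_or_subsingleton.imp ?_ ?_⟩
  · exact hload b hb ▸ h.load_pos b (hsub hb)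
  · exact hcount b hb ▸ h.count_lt b (hsub hb)
  · intro hcrowded a ha b hb hab
    rw [hload a ha, hload b hb]
    exact hcrowded (hsub ha) (hsub hb) hab
  · refine fun hshort => hshort.anti fun b hb => ?_
    obtain ⟨hb, hbk⟩ := mem_short.1 hb
    exact mem_short.2 ⟨hsub hb, hcount b hb ▸ hbk⟩

lemma retire_put {c : ℕ} (h : s.Invariant k) (hs' : ((s.put x c).retire a b).Sound k)
    (hc : c ∈ ({a, b} : Finset ℕ)) : ((s.put x c).retire a b).Invariant k := by
  have old_of_open : ∀ d ∈ ((s.put x c).retire a b).opened, d ≠ c ∧ d ∈ s.opened := by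
    intro d hd
    obtain ⟨hput, hretired⟩ := Finset.mem_sdiff.1 hd
    have hdc : d ≠ c := (ne_of_mem_of_not_mem hc hretired).symm
    exact ⟨hdc, Finset.mem_of_mem_insert_of_ne hput hdc⟩
  exact h.of_opened_subset hs' (fun d hd => (old_of_open d hd).2)
    fun d hd => Function.update_of_ne (old_of_open d hd).1 _ _

lemma put_short (h : s.Invariant k) (hb : b ∈ s.short k) (hx : 0 < x) (hfit : s.load b + x ≤ 1) :
    (s.put x b).Invariant k := by
  obtain ⟨hbo, hbk⟩ := mem_short.1 hb
  have hopened : (s.put x b).opened = s.opened := Finset.insert_eq_self.2 hbo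
  refine ⟨h.toSound.put (h.notMem_retired hbo) (h.count_lt b hbo) hfit, ?_, ?_,
    h.crowded_or_subsingleton.imp ?_ ?_⟩
  · rw [hopened]
    exact fun a ha => (h.load_pos a ha).trans_le (load_le_load_put hx.le a b)
  · rw [hopened]
    intro a ha
    obtain rfl | hab := eq_or_ne a b
    · rwa [count_put_self]
    · rw [count_put_of_ne s x hab]
      exact h.count_lt a ha
  · rw [hopened]
    exact fun hcrowded => hcrowded.imp fun a c hac =>
      hac.trans_le (add_le_add (load_le_load_put hx.le a b) (load_le_load_put hx.le c b))
  · refine fun hshort => hshort.anti fun a ha => ?_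
    obtain ⟨hao, hak⟩ := mem_short.1 ha
    exact mem_short.2 ⟨hopened ▸ hao, by have := count_le_count_put s x a b; omega⟩

lemma complete_long (h : s.Invariant k) (ha : a ∈ s.short k) (hb : b ∈ s.long k)
    (hax : 1 < s.load a + x) (hfit : s.load b + x ≤ 1) :
    ((s.put x b).retire a b).Invariant k := by
  obtain ⟨hao, hak⟩ := mem_short.1 ha
  obtain ⟨hbo, hbk⟩ := mem_long.1 hb
  have hab : a ≠ b := by
    rintro rfl
    omega
  have hput := h.toSound.put (h.notMem_retired hbo) (h.count_lt b hbo) hfit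
  refine h.retire_put (hput.retire (Finset.mem_insert_of_mem hao)
    (Finset.mem_insert_self b _) hab ?_ ?_) (by simp)
  · rw [load_put_of_ne s x hab, load_put_self]
    linarith [h.load_pos b hbo]
  · rw [count_put_self]
    omega

lemma retire_fresh (h : s.Invariant k) (hb : b ∈ s.long k) (hx : x ≤ 1)
    (hbx : 1 < s.load b + x) : ((s.put x s.fresh).retire s.fresh b).Invariant k := by
  obtain ⟨hbo, hbk⟩ := mem_long.1 hb
  have hb_ne : b ≠ s.fresh := ne_of_mem_of_not_mem hbo s.fresh_notMem_opened
  refine h.retire_put ((h.toSound.put_fresh (by omega) hx).retire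
    (Finset.mem_insert_self _ _) (Finset.mem_insert_of_mem hbo) hb_ne.symm ?_ ?_) (by simp)
  · rw [load_put_self, load_put_of_ne s x hb_ne, h.load_fresh]
    linarith
  · rw [count_put_self, count_put_of_ne s x hb_ne]
    omega

lemma crowded_of_forall_short (h : s.Invariant k) (hall : ∀ b ∈ s.opened, b ∈ s.short k) :
    (s.opened : Set ℕ).Pairwise fun a b => 1 < s.load a + s.load b :=
  h.crowded_or_subsingleton.elim id fun hshort => (hshort.anti hall).pairwise _

lemma crowded_put_fresh (h : s.Invariant k) (hall : ∀ b ∈ s.opened, b ∈ s.short k)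
    (hnofit : ∀ b ∈ s.short k, 1 < s.load b + x) :
    ((s.put x s.fresh).opened : Set ℕ).Pairwise
      fun a b => 1 < (s.put x s.fresh).load a + (s.put x s.fresh).load b := by
  have hload : ∀ b ∈ s.opened, (s.put x s.fresh).load b = s.load b := fun b hb =>
    load_put_of_ne s x (ne_of_mem_of_not_mem hb s.fresh_notMem_opened)
  have hnew : ∀ b ∈ s.opened,
      1 < (s.put x s.fresh).load s.fresh + (s.put x s.fresh).load b := fun b hb => by
    rw [load_put_self, h.load_fresh, zero_add, hload b hb, add_comm]
    exact hnofit b (hall b hb)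
  intro a ha b hb hab
  obtain rfl | ha := Finset.mem_insert.1 ha <;> obtain rfl | hb := Finset.mem_insert.1 hb
  · exact absurd rfl hab
  · exact hnew b hb
  · exact add_comm (PackState.load _ a) _ ▸ hnew a ha
  · rw [hload a ha, hload b hb]
    exact h.crowded_of_forall_short hall ha hb hab

lemma put_fresh (h : s.Invariant k) (hk : 2 ≤ k) (hx0 : 0 < x) (hx1 : x ≤ 1)
    (hnofit : ∀ b ∈ s.short k, 1 < s.load b + x)
    (hpair : ¬((s.short k).Nonempty ∧ (s.long k).Nonempty)) :
    (s.put x s.fresh).Invariant k := by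
  have hne : ∀ b ∈ s.opened, b ≠ s.fresh :=
    fun b hb => ne_of_mem_of_not_mem hb s.fresh_notMem_opened
  refine ⟨h.toSound.put_fresh (by omega) hx1, Finset.forall_mem_insert _ _ _ |>.2 ⟨?_, ?_⟩,
    Finset.forall_mem_insert _ _ _ |>.2 ⟨?_, ?_⟩, ?_⟩
  · rwa [load_put_self, h.load_fresh, zero_add]
  · intro b hb
    rw [load_put_of_ne s x (hne b hb)]
    exact h.load_pos b hb
  · rw [count_put_self, h.count_fresh]
    omega
  · intro b hb
    rw [count_put_of_ne s x (hne b hb)]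
    exact h.count_lt b hb
  · obtain hshort | hshort := (s.short k).eq_empty_or_nonempty
    · exact .inr (Set.subsingleton_singleton.anti (mod_cast short_put_fresh_subset hshort))
    · refine .inl (h.crowded_put_fresh (fun b hb => ?_) hnofit)
      have hlong : b ∉ s.long k := fun hb => hpair ⟨hshort, b, hb⟩
      have hlt := h.count_lt b hb
      simp only [mem_short, mem_long, hb, true_and] at hlong ⊢
      omega

lemma step (h : s.Invariant k) (hk : 2 ≤ k) (hx0 : 0 < x) (hx1 : x ≤ 1) :
    (s.step k x).Invariant k := by
  unfold PackState.step
  split_ifs with hfit hpair hlong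
  · exact h.put_short hfit.choose_spec.1 hx0 hfit.choose_spec.2
  · push Not at hfit
    exact h.complete_long hpair.1.choose_spec hpair.2.choose_spec
      (hfit _ hpair.1.choose_spec) hlong
  · exact h.retire_fresh hpair.2.choose_spec hx1 (not_le.1 hlong)
  · push Not at hfit
    exact h.put_fresh hk hx0 hx1 hfit hpair

lemma run {L : List ℝ} (hk : 2 ≤ k) (hL : ValidInput L) : (run k L).Invariant k :=
  List.foldlRecOn L _ (invariant_init k) fun _ hs x hx => hs.step hk (hL x hx).1 (hL x hx).2

lemma card_used_le (h : s.Invariant k) (hk : 0 < k) {m : ℕ} (hload : ∑ b ∈ s.used, s.load b ≤ m)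
    (hcount : ∑ b ∈ s.used, s.count b ≤ k * m) : s.used.card ≤ 2 * m := by
  obtain hcrowded | hshort := h.crowded_or_subsingleton
  · refine h.halfFull_load.card_union_le h.disjoint one_pos h.load_pos ?_
      (hload.trans_eq (mul_one _).symm)
    rintro a ⟨ha, hla⟩ b ⟨hb, hlb⟩
    by_contra hab
    linarith [hcrowded ha hb hab]
  · refine h.halfFull_count.card_union_le h.disjoint (mod_cast hk)
      (fun b hb => mod_cast h.count_pos hb) (hshort.anti ?_)
      (mod_cast hcount.trans_eq (mul_comm k m))
    rintro b ⟨hb, hbk⟩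
    have hbk : 2 * s.count b < k := mod_cast hbk
    have := h.count_pos hb
    exact mem_short.2 ⟨hb, by omega⟩

end Invariant

lemma content_step (k : ℕ) (s : PackState) (x : ℝ) :
    (s.step k x).content = Function.update s.content (s.step k x).last
      (x ::ₘ s.content (s.step k x).last) := by
  unfold step
  split_ifs <;> rfl

end PackState

/-- The online algorithm that packs by the rules of `PackState.step`. -/
def pairing (k : ℕ) (L : List ℝ) : ℕ := (PackState.run k L).last

lemma PackState.content_run (k : ℕ) (L : List ℝ) :
    (run k L).content = binItems L (onlinePacking (pairing k) L) := by
  induction L using List.reverseRecOn with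
  | nil => rfl
  | append_singleton L x ih =>
    have hrun : run k (L ++ [x]) = (run k L).step k x := List.foldl_append
    rw [binItems_onlinePacking_append, ← ih, pairing, hrun, content_step]

lemma PackState.Sound.onlinePacking_mem_used {k : ℕ} {L : List ℝ} (h : (run k L).Sound k)
    (i : Fin L.length) : onlinePacking (pairing k) L i ∈ (run k L).used := by
  by_contra hi
  have hempty := h.content_eq_zero _ hi
  have hmem := mem_binItems (onlinePacking (pairing k) L) i
  rw [← content_run, hempty] at hmem
  exact Multiset.notMem_zero _ hmem

lemma pairing_onlineValid {k : ℕ} (hk : 2 ≤ k) : OnlineValid k (pairing k) := fun L hL =>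
  isFeasible_iff.2 fun b => PackState.content_run k L ▸ (PackState.Invariant.run hk hL).fitsBin b

lemma onlineBins_pairing_le {k : ℕ} (hk : 2 ≤ k) {L : List ℝ} (hL : ValidInput L) :
    onlineBins (pairing k) L ≤ 2 * OPT k L := by
  have hinv := PackState.Invariant.run hk hL
  have hused := hinv.onlinePacking_mem_used
  obtain ⟨f, hf, hopt⟩ :=
    exists_isFeasible_binsUsed_eq_OPT (k := k) (by omega) fun x hx => (hL x hx).2
  have hbins : onlineBins (pairing k) L ≤ (PackState.run k L).used.card :=
    binsUsed_le_card hused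
  refine hbins.trans (hinv.card_used_le (by omega) ?_ ?_)
  · simp only [PackState.load, PackState.content_run, sum_binItems_sum hused, ← hopt]
    exact hf.sum_le_binsUsed
  · simp only [PackState.count, PackState.content_run, sum_card_binItems hused, ← hopt]
    exact hf.length_le_mul_binsUsed

/-- For every k ≥ 2 there is a deterministic online algorithm (such as
Thin-and-Fat) whose absolute competitive ratio is at most 2: for every input `L`,
it uses at most 2·OPT(L) bins. -/
theorem exists_two_competitive_online (k : ℕ) (hk : 2 ≤ k) :
    ∃ A : List ℝ → ℕ, OnlineValid k A ∧
      ∀ L : List ℝ, ValidInput L → (onlineBins A L : ℝ) ≤ 2 * (OPT k L : ℝ) :=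
  ⟨pairing k, pairing_onlineValid hk, fun _ hL => mod_cast onlineBins_pairing_le hk hL⟩
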